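/- Entropy identity used in the achievability proof of Theorem 5: Let (U, U1, S, X1, X2, Y, Z) be finite random variables such that (i) S is independent of the triple (U, U1, X2), (ii) X1 = g(U, U1, S) for some deterministic function g, and (iii) (U, U1) - (X1, X2, S) - (Y, Z) is a Markov chain. Then I(U1;Y|U,X2) - I(U1;Z|U,X2,S) - H(S|U,U1,X2,Y) + H(S|Z,U,X2) = I(X1,S;Y|U,X2) - I(X1,S;Z|U,X2). -/

import Mathlib

/-!
By weak union the Markov chain gives `U1 - (U,X1,X2,S) - Y`. As `X1` is a function of `(U,U1,S)`,
`(X1,S)` and `(U1,S)` then carry the same information about `Y` given `(U,X2)`; likewise for `Z`.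
The chain rule, splitting off `U1` first for `Y` and `S` first for `Z`, gives
`I(X1,S;Y|U,X2) = I(U1;Y|U,X2) + H(S|U,U1,X2) - H(S|U,U1,X2,Y)` and
`I(X1,S;Z|U,X2) = H(S|U,X2) - H(S|Z,U,X2) + I(U1;Z|U,X2,S)`.
The terms `H(S|U,U1,X2)` and `H(S|U,X2)` cancel in the difference because `S` and `U1` are
independent given `(U,X2)`.
-/

open scoped BigOperators

noncomputable section

namespace Paper

/-- `p` is a probability mass function on the finite type `α`. -/
def IsPmf {α : Type*} [Fintype α] (p : α → ℝ) : Prop :=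
  (∀ a, 0 ≤ p a) ∧ ∑ a, p a = 1

/-- `k` is a conditional pmf (a channel / stochastic kernel). -/
def IsKernel {α β : Type*} [Fintype β] (k : α → β → ℝ) : Prop :=
  ∀ a, IsPmf (k a)

/-- Shannon entropy (base 2) of a mass function on a finite type. -/
def ent {α : Type*} [Fintype α] (p : α → ℝ) : ℝ :=
  -∑ a, p a * Real.logb 2 (p a)

/-- Law (pushforward) of the random variable `X` under the mass function `p`. -/
def law {Ω α : Type*} [Fintype Ω] [DecidableEq α] (p : Ω → ℝ) (X : Ω → α) :
    α → ℝ := fun a => ∑ ω, if X ω = a then p ω else 0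

/-- Entropy `H(X)` of a random variable `X`. -/
def H {Ω α : Type*} [Fintype Ω] [Fintype α] [DecidableEq α] (p : Ω → ℝ)
    (X : Ω → α) : ℝ := ent (law p X)

/-- Conditional entropy `H(X|Y)`. -/
def Hc {Ω α β : Type*} [Fintype Ω] [Fintype α] [Fintype β] [DecidableEq α]
    [DecidableEq β] (p : Ω → ℝ) (X : Ω → α) (Y : Ω → β) : ℝ :=
  H p (fun ω => (X ω, Y ω)) - H p Y

/-- Mutual information `I(X;Y)`. -/
def MI {Ω α β : Type*} [Fintype Ω] [Fintype α] [Fintype β] [DecidableEq α]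
    [DecidableEq β] (p : Ω → ℝ) (X : Ω → α) (Y : Ω → β) : ℝ :=
  H p X + H p Y - H p (fun ω => (X ω, Y ω))

/-- Conditional mutual information `I(X;Y|Z)`. -/
def cMI {Ω α β γ : Type*} [Fintype Ω] [Fintype α] [Fintype β] [Fintype γ]
    [DecidableEq α] [DecidableEq β] [DecidableEq γ] (p : Ω → ℝ) (X : Ω → α)
    (Y : Ω → β) (Z : Ω → γ) : ℝ :=
  Hc p X Z - Hc p X (fun ω => (Y ω, Z ω))

/-- Kullback–Leibler divergence (base 2). -/
def KL {α : Type*} [Fintype α] (p q : α → ℝ) : ℝ :=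
  ∑ a, p a * Real.logb 2 (p a / q a)

/-- Binary entropy function. -/
def hb (x : ℝ) : ℝ := -(x * Real.logb 2 x) - (1 - x) * Real.logb 2 (1 - x)

/-- A (message-indexed) encoder is causal: its `j`-th output symbol depends only on the
first `j` state symbols. -/
def Causal {M A B : Type*} {n : ℕ} (e : M → (Fin n → A) → Fin n → B) : Prop :=
  ∀ m s s' j, (∀ i, i ≤ j → s i = s' i) → e m s j = e m s' j

/-- A strictly causal encoder: its `j`-th output symbol depends only on the state symbols
strictly before `j`. -/
def StrictlyCausal {M A B : Type*} {n : ℕ} (e : M → (Fin n → A) → Fin n → B) : Prop :=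
  ∀ m s s' j, (∀ i, i < j → s i = s' i) → e m s j = e m s' j

section Law

variable {Ω α β γ : Type*} [Fintype Ω] [DecidableEq α] [DecidableEq β] [DecidableEq γ]
  {p : Ω → ℝ} {X : Ω → α} {Y : Ω → β}

lemma law_congr {a : α} {b : β} (h : ∀ ω, X ω = a ↔ Y ω = b) : law p X a = law p Y b := by
  simp only [law, h]

lemma law_mono (hp : ∀ ω, 0 ≤ p ω) {a : α} {b : β} (h : ∀ ω, X ω = a → Y ω = b) :
    law p X a ≤ law p Y b :=
  Finset.sum_le_sum fun ω _ => by grind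

lemma law_nonneg (hp : ∀ ω, 0 ≤ p ω) (X : Ω → α) (a : α) : 0 ≤ law p X a :=
  Finset.sum_nonneg fun ω _ => by grind

lemma law_eq_zero_of_imp (hp : ∀ ω, 0 ≤ p ω) {a : α} {b : β} (h : ∀ ω, X ω = a → Y ω = b)
    (hb : law p Y b = 0) : law p X a = 0 :=
  le_antisymm (hb ▸ law_mono hp h) (law_nonneg hp X a)

lemma law_apply_ne_zero (hp : ∀ ω, 0 ≤ p ω) (X : Ω → α) {ω : Ω} (hω : p ω ≠ 0) :
    law p X (X ω) ≠ 0 := fun h => hω <| by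
  have hfibre := (Finset.sum_eq_zero_iff_of_nonneg fun ω' _ => by grind).1 h ω (Finset.mem_univ ω)
  rwa [if_pos rfl] at hfibre

lemma sum_law_mul [Fintype α] (p : Ω → ℝ) (X : Ω → α) (φ : α → ℝ) :
    ∑ a, law p X a * φ a = ∑ ω, p ω * φ (X ω) := by
  simp only [law, Finset.sum_mul, ite_mul, zero_mul]
  rw [Finset.sum_comm]
  simp only [Finset.sum_ite_eq, Finset.mem_univ, if_true]

lemma law_comp_pair (p : Ω → ℝ) (X : Ω → α) (f : α → β) (Y : Ω → γ) (b : β) (c : γ) :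
    law p (fun ω => (f (X ω), Y ω)) (b, c) =
      ∑ a ∈ Finset.univ.image X with f a = b, law p (fun ω => (X ω, Y ω)) (a, c) := by
  simp only [law, Prod.mk.injEq, ite_and]
  rw [Finset.sum_comm]
  simp only [Finset.sum_ite_eq, Finset.mem_filter,
    Finset.mem_image_of_mem X (Finset.mem_univ _), true_and]

end Law

section Entropy

variable {Ω α α' β γ γ' : Type*} [Fintype Ω] [Fintype α] [Fintype α'] [Fintype β] [Fintype γ]
  [Fintype γ'] [DecidableEq α] [DecidableEq α'] [DecidableEq β] [DecidableEq γ] [DecidableEq γ']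
  {p : Ω → ℝ} {X : Ω → α} {X' : Ω → α'} {Y : Ω → β} {Z : Ω → γ} {Z' : Ω → γ'}

lemma H_eq_sum (p : Ω → ℝ) (X : Ω → α) :
    H p X = -∑ ω, p ω * Real.logb 2 (law p X (X ω)) :=
  congrArg Neg.neg (sum_law_mul p X fun a => Real.logb 2 (law p X a))

lemma H_congr (h : ∀ ω ω', X ω = X ω' ↔ Y ω = Y ω') : H p X = H p Y := by
  simp only [H_eq_sum, law, h]

lemma Hc_congr (hX : ∀ ω ω', Z ω = Z ω' → (X ω = X ω' ↔ X' ω = X' ω'))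
    (hZ : ∀ ω ω', Z ω = Z ω' ↔ Z' ω = Z' ω') : Hc p X Z = Hc p X' Z' :=
  congrArg₂ (· - ·) (H_congr <| by grind) (H_congr hZ)

lemma cMI_congr (hX : ∀ ω ω', Z ω = Z ω' → (X ω = X ω' ↔ X' ω = X' ω'))
    (hZ : ∀ ω ω', Z ω = Z ω' ↔ Z' ω = Z' ω') : cMI p X Y Z = cMI p X' Y Z' :=
  congrArg₂ (· - ·) (Hc_congr hX hZ) (Hc_congr (by grind) (by grind))

lemma Hc_pair (p : Ω → ℝ) (X : Ω → α) (Y : Ω → β) (Z : Ω → γ) :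
    Hc p (fun ω => (X ω, Y ω)) Z = Hc p X Z + Hc p Y (fun ω => (X ω, Z ω)) := by
  have hassoc : H p (fun ω => ((X ω, Y ω), Z ω)) = H p (fun ω => (Y ω, X ω, Z ω)) :=
    H_congr <| by grind
  unfold Hc
  linarith

lemma cMI_pair (p : Ω → ℝ) (X : Ω → α) (X' : Ω → α') (Y : Ω → β) (Z : Ω → γ) :
    cMI p (fun ω => (X ω, X' ω)) Y Z = cMI p X Y Z + cMI p X' Y (fun ω => (X ω, Z ω)) := by
  have hswap : Hc p X' (fun ω => (X ω, Y ω, Z ω)) = Hc p X' (fun ω => (Y ω, X ω, Z ω)) :=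
    Hc_congr (by grind) (by grind)
  unfold cMI
  rw [Hc_pair, Hc_pair, hswap]
  ring

lemma cMI_pair_swap (p : Ω → ℝ) (X : Ω → α) (X' : Ω → α') (Y : Ω → β) (Z : Ω → γ) :
    cMI p (fun ω => (X ω, X' ω)) Y Z = cMI p X' Y Z + cMI p X Y (fun ω => (X' ω, Z ω)) :=
  (cMI_congr (by grind) (by grind)).trans (cMI_pair p X' X Y Z)

lemma cMI_eq_of_sufficient (hX' : X'.FactorsThrough fun ω => (X ω, Z ω))
    (h : cMI p X Y (fun ω => (X' ω, Z ω)) = 0) : cMI p X' Y Z = cMI p X Y Z :=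
  calc cMI p X' Y Z = cMI p X' Y Z + cMI p X Y (fun ω => (X' ω, Z ω)) := by rw [h, add_zero]
    _ = cMI p (fun ω => (X' ω, X ω)) Y Z := (cMI_pair p X' X Y Z).symm
    _ = cMI p X Y Z := cMI_congr (by grind [Function.FactorsThrough]) (by grind)

end Entropy

/-- Conditional independence of `A` and `B` given `C`, in the division-free form
`P(a,b,c) P(c) = P(a,c) P(b,c)`, which avoids conditioning on values with `P(c) = 0`. -/
def CondIndepFun {Ω α β γ : Type*} [Fintype Ω] [DecidableEq α] [DecidableEq β] [DecidableEq γ]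
    (p : Ω → ℝ) (A : Ω → α) (B : Ω → β) (C : Ω → γ) : Prop :=
  ∀ a b c, law p (fun ω => (A ω, B ω, C ω)) (a, b, c) * law p C c =
    law p (fun ω => (A ω, C ω)) (a, c) * law p (fun ω => (B ω, C ω)) (b, c)

section CondIndep

variable {Ω α β γ δ ε : Type*} [Fintype Ω] [DecidableEq α] [DecidableEq β] [DecidableEq γ]
  [DecidableEq δ] [DecidableEq ε] {p : Ω → ℝ} {A : Ω → α} {B : Ω → β} {C : Ω → γ}

lemma CondIndepFun.symm (h : CondIndepFun p A B C) : CondIndepFun p B A C := fun b a c => by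
  have hswap : law p (fun ω => (B ω, A ω, C ω)) (b, a, c) =
      law p (fun ω => (A ω, B ω, C ω)) (a, b, c) := law_congr <| by grind
  rw [hswap, h a b c, mul_comm]

lemma CondIndepFun.map_left (h : CondIndepFun p A B C) (f : α → δ) :
    CondIndepFun p (fun ω => f (A ω)) B C := fun d b c => by
  rw [law_comp_pair p A f fun ω => (B ω, C ω), law_comp_pair p A f C, Finset.sum_mul,
    Finset.sum_mul]
  exact Finset.sum_congr rfl fun a _ => h a b c

lemma CondIndepFun.map_right (h : CondIndepFun p A B C) (f : β → δ) :
    CondIndepFun p A (fun ω => f (B ω)) C :=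
  (h.symm.map_left f).symm

lemma CondIndepFun.weak_union (hp : ∀ ω, 0 ≤ p ω) (h : CondIndepFun p A B C)
    (f : β → δ) (g : β → ε) :
    CondIndepFun p A (fun ω => f (B ω)) (fun ω => (g (B ω), C ω)) := by
  rintro a d ⟨e, c⟩
  have hg := h.map_right g a e c
  have hassoc : law p (fun ω => ((f (B ω), g (B ω)), C ω)) ((d, e), c) =
      law p (fun ω => (f (B ω), g (B ω), C ω)) (d, e, c) := law_congr <| by grind
  have hassoc' : law p (fun ω => (A ω, (f (B ω), g (B ω)), C ω)) (a, (d, e), c) =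
      law p (fun ω => (A ω, f (B ω), g (B ω), C ω)) (a, d, e, c) := law_congr <| by grind
  have hfg := h.map_right (fun b => (f b, g b)) a (d, e) c
  rw [hassoc, hassoc'] at hfg
  rcases eq_or_ne (law p C c) 0 with hc | hc
  · have hgC : law p (fun ω => (g (B ω), C ω)) (e, c) = 0 :=
      law_eq_zero_of_imp hp (by grind) hc
    have hfgC : law p (fun ω => (f (B ω), g (B ω), C ω)) (d, e, c) = 0 :=
      law_eq_zero_of_imp hp (by grind) hc
    rw [hgC, hfgC, mul_zero, mul_zero]
  · refine mul_right_cancel₀ hc ?_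
    linear_combination law p (fun ω => (g (B ω), C ω)) (e, c) * hfg
      - law p (fun ω => (f (B ω), g (B ω), C ω)) (d, e, c) * hg

lemma condIndepFun_of_indep (hp : IsPmf p)
    (h : ∀ a b, law p (fun ω => (A ω, B ω)) (a, b) = law p A a * law p B b)
    (f : β → δ) (g : β → ε) :
    CondIndepFun p A (fun ω => f (B ω)) (fun ω => g (B ω)) := by
  have hconst : CondIndepFun p A B (fun _ => ()) := fun a b _ => by
    have hab := h a b
    simp only [law, Prod.mk.injEq, and_true, if_true, hp.2, mul_one] at hab ⊢
    exact hab
  intro a d e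
  simpa only [law, Prod.mk.injEq, and_true] using hconst.weak_union hp.1 f g a d (e, ())

lemma CondIndepFun.cMI_eq_zero [Fintype α] [Fintype β] [Fintype γ] (hp : ∀ ω, 0 ≤ p ω)
    (h : CondIndepFun p A B C) : cMI p A B C = 0 := by
  -- Logarithms of the defining equation at the sample points of positive mass, averaged over `p`.
  have hH : H p (fun ω => (A ω, B ω, C ω)) + H p C =
      H p (fun ω => (A ω, C ω)) + H p (fun ω => (B ω, C ω)) := by
    simp only [H_eq_sum, ← neg_add, ← Finset.sum_add_distrib, ← mul_add]
    refine congrArg Neg.neg (Finset.sum_congr rfl fun ω _ => ?_)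
    rcases eq_or_ne (p ω) 0 with hω | hω
    · rw [hω, zero_mul, zero_mul]
    · rw [← Real.logb_mul (law_apply_ne_zero hp (fun ω => (A ω, B ω, C ω)) hω)
          (law_apply_ne_zero hp C hω),
        ← Real.logb_mul (law_apply_ne_zero hp (fun ω => (A ω, C ω)) hω)
          (law_apply_ne_zero hp (fun ω => (B ω, C ω)) hω), h]
  unfold cMI Hc
  linarith

end CondIndep

theorem entropy_identity_general {Ω U U1 SA XA1 XA2 YA ZA : Type*}
    [Fintype Ω] [Fintype U] [Fintype U1] [Fintype SA] [Fintype XA1] [Fintype XA2]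
    [Fintype YA] [Fintype ZA] [DecidableEq U] [DecidableEq U1] [DecidableEq SA]
    [DecidableEq XA1] [DecidableEq XA2] [DecidableEq YA] [DecidableEq ZA]
    {p : Ω → ℝ} (hp : IsPmf p)
    {Uf : Ω → U} {U1f : Ω → U1} {Sf : Ω → SA} {X1f : Ω → XA1} {X2f : Ω → XA2}
    {Yf : Ω → YA} {Zf : Ω → ZA}
    (hS : CondIndepFun p Sf U1f (fun ω => (Uf ω, X2f ω)))
    (hX1 : X1f.FactorsThrough fun ω => (Uf ω, U1f ω, X2f ω, Sf ω))
    (hY : CondIndepFun p U1f Yf (fun ω => (Uf ω, X1f ω, X2f ω, Sf ω)))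
    (hZ : CondIndepFun p U1f Zf (fun ω => (Uf ω, X1f ω, X2f ω, Sf ω))) :
    cMI p U1f Yf (fun ω => (Uf ω, X2f ω)) -
        cMI p U1f Zf (fun ω => (Uf ω, X2f ω, Sf ω)) -
        Hc p Sf (fun ω => (Uf ω, U1f ω, X2f ω, Yf ω)) +
        Hc p Sf (fun ω => (Zf ω, Uf ω, X2f ω)) =
      cMI p (fun ω => (X1f ω, Sf ω)) Yf (fun ω => (Uf ω, X2f ω)) -
        cMI p (fun ω => (X1f ω, Sf ω)) Zf (fun ω => (Uf ω, X2f ω)) := by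
  have hfactor : (fun ω => (X1f ω, Sf ω)).FactorsThrough
      fun ω => ((U1f ω, Sf ω), Uf ω, X2f ω) := by grind [Function.FactorsThrough]
  have hXY : cMI p (fun ω => (X1f ω, Sf ω)) Yf (fun ω => (Uf ω, X2f ω)) =
      cMI p (fun ω => (U1f ω, Sf ω)) Yf (fun ω => (Uf ω, X2f ω)) :=
    cMI_eq_of_sufficient hfactor <|
      (cMI_congr (by grind) (by grind)).trans (hY.cMI_eq_zero hp.1)
  have hXZ : cMI p (fun ω => (X1f ω, Sf ω)) Zf (fun ω => (Uf ω, X2f ω)) =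
      cMI p (fun ω => (U1f ω, Sf ω)) Zf (fun ω => (Uf ω, X2f ω)) :=
    cMI_eq_of_sufficient hfactor <|
      (cMI_congr (by grind) (by grind)).trans (hZ.cMI_eq_zero hp.1)
  have hSU1 : Hc p Sf (fun ω => (Uf ω, X2f ω)) = Hc p Sf (fun ω => (U1f ω, Uf ω, X2f ω)) :=
    sub_eq_zero.1 (hS.cMI_eq_zero hp.1)
  have hSY : Hc p Sf (fun ω => (Uf ω, U1f ω, X2f ω, Yf ω)) =
      Hc p Sf (fun ω => (Yf ω, U1f ω, Uf ω, X2f ω)) := Hc_congr (by grind) (by grind)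
  have hU1Z : cMI p U1f Zf (fun ω => (Uf ω, X2f ω, Sf ω)) =
      cMI p U1f Zf (fun ω => (Sf ω, Uf ω, X2f ω)) := cMI_congr (by grind) (by grind)
  rw [hXY, cMI_pair, hXZ, cMI_pair_swap, hSY, hU1Z, cMI.eq_def p Sf, cMI.eq_def p Sf, hSU1]
  ring

/-- **Entropy identity used in the achievability proof of Theorem 5.**
If `S` is independent of `(U,U1,X2)`, `X1` is a deterministic function of `(U,U1,S)`, and
`(U,U1) - (X1,X2,S) - (Y,Z)` is a Markov chain, then
`I(U1;Y|U,X2) - I(U1;Z|U,X2,S) - H(S|U,U1,X2,Y) + H(S|Z,U,X2)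
  = I(X1,S;Y|U,X2) - I(X1,S;Z|U,X2)`. -/
theorem entropy_identity {Ω U U1 SA XA1 XA2 YA ZA : Type}
    [Fintype Ω] [Fintype U] [Fintype U1] [Fintype SA] [Fintype XA1] [Fintype XA2]
    [Fintype YA] [Fintype ZA] [DecidableEq U] [DecidableEq U1] [DecidableEq SA]
    [DecidableEq XA1] [DecidableEq XA2] [DecidableEq YA] [DecidableEq ZA]
    (p : Ω → ℝ) (hp : IsPmf p)
    (Uf : Ω → U) (U1f : Ω → U1) (Sf : Ω → SA) (X1f : Ω → XA1) (X2f : Ω → XA2)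
    (Yf : Ω → YA) (Zf : Ω → ZA)
    -- (i) `S` is independent of `(U, U1, X2)`:
    (hindep : ∀ s t, law p (fun ω => (Sf ω, (Uf ω, U1f ω, X2f ω))) (s, t) =
      law p Sf s * law p (fun ω => (Uf ω, U1f ω, X2f ω)) t)
    -- (ii) `X1 = g(U, U1, S)` for a deterministic function `g`:
    (hdet : ∃ g : U → U1 → SA → XA1, ∀ ω, X1f ω = g (Uf ω) (U1f ω) (Sf ω))
    -- (iii) `(U,U1) - (X1,X2,S) - (Y,Z)` is a Markov chain:
    (hmarkov : ∀ a b c,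
      law p (fun ω => ((Yf ω, Zf ω), (Uf ω, U1f ω), (X1f ω, X2f ω, Sf ω))) (a, b, c) *
          law p (fun ω => (X1f ω, X2f ω, Sf ω)) c =
        law p (fun ω => ((Yf ω, Zf ω), (X1f ω, X2f ω, Sf ω))) (a, c) *
          law p (fun ω => ((Uf ω, U1f ω), (X1f ω, X2f ω, Sf ω))) (b, c)) :
    cMI p U1f Yf (fun ω => (Uf ω, X2f ω)) -
        cMI p U1f Zf (fun ω => (Uf ω, X2f ω, Sf ω)) -
        Hc p Sf (fun ω => (Uf ω, U1f ω, X2f ω, Yf ω)) +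
        Hc p Sf (fun ω => (Zf ω, Uf ω, X2f ω)) =
      cMI p (fun ω => (X1f ω, Sf ω)) Yf (fun ω => (Uf ω, X2f ω)) -
        cMI p (fun ω => (X1f ω, Sf ω)) Zf (fun ω => (Uf ω, X2f ω)) := by
  obtain ⟨g, hg⟩ := hdet
  have hM : CondIndepFun p (fun ω => (Yf ω, Zf ω)) (fun ω => (Uf ω, U1f ω))
      (fun ω => (X1f ω, X2f ω, Sf ω)) := hmarkov
  exact entropy_identity_general hp
    (condIndepFun_of_indep hp hindep (fun t => t.2.1) (fun t => (t.1, t.2.2)))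
    (fun ω ω' h => by grind)
    ((hM.map_left Prod.fst).weak_union hp.1 Prod.snd Prod.fst).symm
    ((hM.map_left Prod.snd).weak_union hp.1 Prod.snd Prod.fst).symm

end Paper
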